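/- For every sufficiently large n with n ≡ 1 (mod 3), starting from the path P_n (in which agent v_i buys the edge {v_i, v_{i+1}} for 1 ≤ i ≤ n−1), there exists a sequence of at most n − 2 + (n−7)/3 steps, in each of which one agent adds a single edge to her strategy and thereby strictly decreases her cost, such that the final strategy vector is an equilibrium of the degAOG (no agent can strictly decrease her cost by adding any set of edges). -/

import Mathlib

/-!
The equilibrium is reached by building a hub.  With nodes numbered `0, …, n - 1`, node `3` is the hub.

* The nodes `5, 6, …, n - 1` buy, in this order, the edge to `3`.  When `k` does so, it comes one
  step closer to every node below `k - 2`: the pendant path `2, 1, 0` hanging off the hub supplies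
  the few extra units of gain that make `k - 2` exceed the price `k - 3`.
* Node `0`, at distance `3` from the hub, then buys the edge to `3`; this saves `2` for each of the
  `n - 4` nodes `4, …, n - 1` and costs `n - 3`.
* Only node `1` now misses the hub.  It is at distance `3` from exactly `4, …, n - 1`, and `n - 4` is
  divisible by three.  It buys `5, 8, …, n - 2`; each of these edges costs `3` and saves `2 + 1 + 1`.

The resulting network has diameter two and minimum degree at least two, so a new edge saves at most
`1` and costs at least `1` (`isAOEq_of_diam_two`).  There are `(n - 4) + (n - 4) / 3` steps in total.
Improvement of a step is checked by `cost_lt_of_gain`: distances before the step are bounded below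
by `1`-Lipschitz potentials (`le_edist_of_lipschitz`), and those after the step above by short walks.
-/

/-!
Degree price network creation games (degNCG / degkNCG / degAOG / degkAOG).

A strategy vector assigns to each agent `u` a finite set `st u` of nodes to
which `u` buys an edge.  The induced graph has an edge `{u,v}` iff `v ∈ st u`
or `u ∈ st v`.  The cost of agent `u` is the sum of `deg v - 1` over all `v`
to which `u` bought an edge, plus the sum of (extended, i.e. `⊤` when
unreachable) graph distances from `u` to all nodes.
-/

/-- A strategy vector: each agent picks the set of nodes it buys edges to. -/
abbrev Strategy (V : Type) := V → Finset V

variable {V : Type} [Fintype V] [DecidableEq V]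

/-- The network induced by a strategy vector: `{u,v}` is an edge iff
`v ∈ st u` or `u ∈ st v`. -/
def netG (st : Strategy V) : SimpleGraph V :=
  SimpleGraph.fromRel (fun u v => v ∈ st u)

/-- The degree of a node in the induced network. -/
noncomputable def deg (st : Strategy V) (v : V) : ℕ :=
  letI : DecidableRel (netG st).Adj := Classical.decRel _
  (netG st).degree v

/-- The cost of agent `u`: degree-prices of the bought edges plus the sum of
the distances to all nodes (`⊤` if some node is unreachable). -/
noncomputable def cost (st : Strategy V) (u : V) : ℕ∞ :=
  ((∑ v ∈ st u, (deg st v - 1) : ℕ) : ℕ∞) + ∑ w, (netG st).edist u w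

/-- A strategy vector is valid if nobody buys a self-loop and every edge has
exactly one owner. -/
def Valid (st : Strategy V) : Prop :=
  (∀ u, u ∉ st u) ∧ (∀ u v, v ∈ st u → u ∉ st v)

/-- Pure Nash equilibrium of the degNCG: no agent can strictly decrease her
cost by unilaterally switching to any other strategy. -/
def IsNE (st : Strategy V) : Prop :=
  ∀ (u : V) (t : Finset V), u ∉ t →
    cost st u ≤ cost (Function.update st u t) u

/-- `k`-local Nash equilibrium of the degkNCG: no agent can strictly decrease
her cost by a deviation in which every newly bought edge goes to a node at
distance at most `k` in the current graph. -/
def IskNE (k : ℕ) (st : Strategy V) : Prop :=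
  ∀ (u : V) (t : Finset V), u ∉ t →
    (∀ v ∈ t \ st u, (netG st).edist u v ≤ k) →
    cost st u ≤ cost (Function.update st u t) u

/-- Equilibrium of the add-only game degAOG: no agent can strictly decrease
her cost by adding edges (deviations are supersets of the current strategy). -/
def IsAOEq (st : Strategy V) : Prop :=
  ∀ (u : V) (t : Finset V), u ∉ t → st u ⊆ t →
    cost st u ≤ cost (Function.update st u t) u

/-- Equilibrium of the `k`-local add-only game degkAOG. -/
def IskAOEq (k : ℕ) (st : Strategy V) : Prop :=
  ∀ (u : V) (t : Finset V), u ∉ t → st u ⊆ t →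
    (∀ v ∈ t \ st u, (netG st).edist u v ≤ k) →
    cost st u ≤ cost (Function.update st u t) u

/-- The social cost: the sum of all agents' costs. -/
noncomputable def social (st : Strategy V) : ℕ∞ :=
  ∑ u, cost st u

/-- The center sponsored spanning star on `n + 2` nodes: agent `0` buys an
edge to every other agent, everybody else buys nothing. -/
def starStrat (n : ℕ) : Strategy (Fin (n + 2)) := fun u =>
  if u = 0 then ({0} : Finset (Fin (n + 2)))ᶜ else ∅

/-- The path `P_n = v_0 v_1 ⋯ v_{n-1}` as a strategy vector: agent `v_i` buys
the edge to `v_{i+1}`. -/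
def pathStrat (n : ℕ) : Strategy (Fin n) := fun i =>
  if h : (i : ℕ) + 1 < n then {⟨(i : ℕ) + 1, h⟩} else ∅

/-! ### Distances, degrees and costs -/

/-- A function that grows by at most one along each edge is a lower bound for the distance from any
of its zeros. -/
lemma le_edist_of_lipschitz {W : Type} {G : SimpleGraph W} (f : W → ℕ)
    (h : ∀ a b, G.Adj a b → f b ≤ f a + 1) (u w : W) (hu : f u = 0) :
    (f w : ℕ∞) ≤ G.edist u w := by
  have key : ∀ (x y : W) (p : G.Walk x y), f y ≤ f x + p.length := by
    intro x y p
    induction p with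
    | nil => simp
    | cons hadj p ih =>
      have := h _ _ hadj
      simp only [SimpleGraph.Walk.length_cons]
      omega
  refine le_iInf fun p => ?_
  have := key u w p
  rw [hu] at this
  exact_mod_cast (by omega : f w ≤ p.length)

lemma edist_le_one {W : Type} {G : SimpleGraph W} {a b : W} (h : G.Adj a b) :
    G.edist a b ≤ 1 := (SimpleGraph.edist_eq_one_iff_adj.2 h).le

lemma edist_le_succ {W : Type} {G : SimpleGraph W} {a b c : W} {m : ℕ}
    (h : G.edist a b ≤ (m : ℕ∞)) (h' : G.Adj b c) : G.edist a c ≤ ((m + 1 : ℕ) : ℕ∞) := by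
  refine SimpleGraph.edist_triangle.trans (?_ : G.edist a b + G.edist b c ≤ _)
  push_cast
  exact add_le_add h (edist_le_one h')

lemma edist_le_two {W : Type} {G : SimpleGraph W} {a b c : W}
    (h : G.Adj a b) (h' : G.Adj b c) : G.edist a c ≤ 2 := by
  have := edist_le_succ (m := 1) (by exact_mod_cast edist_le_one h) h'
  exact_mod_cast this

lemma two_le_edist {W : Type} {G : SimpleGraph W} {a b : W}
    (hne : a ≠ b) (h : ¬ G.Adj a b) : 2 ≤ G.edist a b := by
  have h0 : G.edist a b ≠ 0 := fun h0 => hne (SimpleGraph.edist_eq_zero_iff.1 h0)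
  have h1 : G.edist a b ≠ 1 := fun h1 => h (SimpleGraph.edist_eq_one_iff_adj.1 h1)
  generalize G.edist a b = d at h0 h1 ⊢
  induction d using ENat.recTopCoe with
  | top => simp
  | coe d =>
    have h0' : d ≠ 0 := by exact_mod_cast h0
    have h1' : d ≠ 1 := by exact_mod_cast h1
    exact_mod_cast (by omega : 2 ≤ d)

lemma netG_adj {W : Type} (st : Strategy W) (a b : W) :
    (netG st).Adj a b ↔ a ≠ b ∧ (b ∈ st a ∨ a ∈ st b) := by
  simp [netG, SimpleGraph.fromRel_adj]

lemma netG_mono {W : Type} {st st' : Strategy W} (h : ∀ u, st u ⊆ st' u) :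
    netG st ≤ netG st' := by
  intro a b
  simp only [netG_adj]
  rintro ⟨hne, hab | hab⟩
  · exact ⟨hne, .inl (h _ hab)⟩
  · exact ⟨hne, .inr (h _ hab)⟩

lemma subset_update {W : Type} [DecidableEq W] {st : Strategy W} {u : W} {t : Finset W}
    (h : st u ⊆ t) (x : W) : st x ⊆ Function.update st u t x := by
  by_cases hx : x = u
  · subst hx; simpa using h
  · simp [Function.update_of_ne hx]

lemma deg_mono {W : Type} [Fintype W] {st st' : Strategy W} {v : W}
    (h : ∀ w, (netG st).Adj v w → (netG st').Adj v w) : deg st v ≤ deg st' v := by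
  classical
  unfold deg
  rw [← SimpleGraph.card_neighborFinset_eq_degree, ← SimpleGraph.card_neighborFinset_eq_degree]
  refine Finset.card_le_card fun w hw => ?_
  rw [SimpleGraph.mem_neighborFinset] at hw ⊢
  exact h w hw

lemma deg_le_card {n : ℕ} {st : Strategy (Fin n)} {v : Fin n} (S : Finset ℕ)
    (h : ∀ w, (netG st).Adj v w → (w : ℕ) ∈ S) : deg st v ≤ S.card := by
  classical
  unfold deg
  rw [← SimpleGraph.card_neighborFinset_eq_degree]
  refine Finset.card_le_card_of_injOn (fun w => (w : ℕ)) ?_ (Fin.val_injective.injOn)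
  intro w hw
  refine h w ?_
  simpa using hw

lemma two_le_deg {W : Type} [Fintype W] {st : Strategy W} {v a b : W} (hab : a ≠ b)
    (ha : (netG st).Adj v a) (hb : (netG st).Adj v b) : 2 ≤ deg st v := by
  classical
  unfold deg
  rw [← SimpleGraph.card_neighborFinset_eq_degree, ← Finset.card_pair hab]
  refine Finset.card_le_card fun w hw => ?_
  rw [SimpleGraph.mem_neighborFinset]
  rcases Finset.mem_insert.1 hw with rfl | hw
  · exact ha
  · rw [Finset.mem_singleton] at hw; exact hw ▸ hb

/-- Buying the single edge to `v` strictly pays off for `u` if the distance savings `c` add up to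
more than the price of `v`. The prices of the edges bought before do not change. -/
lemma cost_lt_of_gain {W : Type} [Fintype W] [DecidableEq W] {st st' : Strategy W} {u v : W}
    (hst' : st' = Function.update st u (insert v (st u)))
    (hv : v ∉ st u) (hu : u ∉ st u)
    (hconn : (netG st).Preconnected) (c : W → ℕ)
    (hc : ∀ w, (netG st').edist u w + c w ≤ (netG st).edist u w)
    (hprice : deg st' v - 1 < ∑ w, c w) :
    cost st' u < cost st u := by
  have hsub : ∀ x, st x ⊆ st' x := by
    rw [hst']; exact subset_update (Finset.subset_insert _ _)
  have hdeg : ∀ x ∈ st u, deg st' x ≤ deg st x := by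
    intro x hx
    have hxu : x ≠ u := fun h => hu (h ▸ hx)
    have hxv : x ≠ v := fun h => hv (h ▸ hx)
    refine deg_mono fun w => ?_
    simp only [netG_adj, hst', Function.update_of_ne hxu]
    rintro ⟨hne, h | h⟩
    · exact ⟨hne, .inl h⟩
    · by_cases hw : w = u
      · subst hw; exact ⟨hne, .inr hx⟩
      · rw [Function.update_of_ne hw] at h; exact ⟨hne, .inr h⟩
  have hP : ∑ x ∈ st' u, (deg st' x - 1) ≤ (deg st' v - 1) + ∑ x ∈ st u, (deg st x - 1) := by
    have : st' u = insert v (st u) := by simp [hst']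
    rw [this, Finset.sum_insert hv]
    refine Nat.add_le_add_left (Finset.sum_le_sum fun x hx => ?_) _
    have := hdeg x hx
    omega
  have hD : ∑ w, (netG st').edist u w + ((∑ w, c w : ℕ) : ℕ∞) ≤ ∑ w, (netG st).edist u w := by
    push_cast
    rw [← Finset.sum_add_distrib]
    exact Finset.sum_le_sum fun w _ => hc w
  have hfin : ∑ w, (netG st').edist u w ≠ ⊤ := by
    have : ∀ w, (netG st').edist u w ≠ ⊤ := fun w =>
      SimpleGraph.edist_ne_top_iff_reachable.2 ((hconn u w).mono (netG_mono hsub))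
    rw [← lt_top_iff_ne_top]
    exact WithTop.sum_lt_top.2 fun w _ => lt_top_iff_ne_top.2 (this w)
  obtain ⟨d, hd⟩ := ENat.ne_top_iff_exists.1 hfin
  unfold cost
  refine lt_of_lt_of_le ?_ (add_le_add_right hD _)
  rw [← hd]
  norm_cast
  omega

/-- In a network of diameter at most two and minimum degree at least two, any new edge saves at
most `1` and costs at least `1`. -/
lemma isAOEq_of_diam_two {W : Type} [Fintype W] [DecidableEq W] {st : Strategy W}
    (hdiam : ∀ x y, (netG st).edist x y ≤ 2) (hdeg : ∀ x, 2 ≤ deg st x) : IsAOEq st := by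
  intro u t hut hsub
  set st' := Function.update st u t with hst'
  have hmono : ∀ x, st x ⊆ st' x := subset_update hsub
  have hdeg' : ∀ x, deg st x ≤ deg st' x := fun x => deg_mono fun w h => netG_mono hmono h
  have hu : st' u = t := by simp [hst']
  have hP : (∑ x ∈ st u, (deg st x - 1)) + ∑ w, (if w ∈ t \ st u then 1 else 0)
      ≤ ∑ x ∈ st' u, (deg st' x - 1) := by
    rw [hu, ← Finset.sum_sdiff hsub, add_comm]
    refine Nat.add_le_add ?_ (Finset.sum_le_sum fun x _ => Nat.sub_le_sub_right (hdeg' x) 1)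
    rw [← Finset.sum_filter, Finset.filter_mem_eq_inter, Finset.univ_inter]
    refine Finset.sum_le_sum fun x _ => ?_
    have := hdeg x
    have := hdeg' x
    omega
  have hD : ∑ w, (netG st).edist u w ≤ ((∑ w, (if w ∈ t \ st u then 1 else 0) : ℕ) : ℕ∞)
      + ∑ w, (netG st').edist u w := by
    push_cast
    rw [← Finset.sum_add_distrib]
    refine Finset.sum_le_sum fun w _ => ?_
    by_cases hw : u = w
    · subst hw; simp
    have hpos : 1 ≤ (netG st').edist u w := by
      rw [Order.one_le_iff_ne_zero]
      exact fun h => hw (SimpleGraph.edist_eq_zero_iff.1 h)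
    by_cases hwt : w ∈ t \ st u
    · rw [if_pos hwt]
      refine (hdiam u w).trans ?_
      rw [← one_add_one_eq_two]
      exact add_le_add_right hpos 1
    · rw [if_neg hwt, zero_add]
      by_cases hadj : (netG st).Adj u w
      · exact (edist_le_one hadj).trans hpos
      · refine (hdiam u w).trans (two_le_edist hw fun h => hadj ?_)
        rw [netG_adj] at h ⊢
        refine ⟨hw, h.2.imp (fun h => ?_) (fun h => ?_)⟩
        · rw [hu] at h
          by_contra h'
          exact hwt (Finset.mem_sdiff.2 ⟨h, h'⟩)
        · rwa [hst', Function.update_of_ne (Ne.symm hw)] at h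
  unfold cost
  refine (add_le_add_right hD _).trans ?_
  rw [← add_assoc]
  refine add_le_add_left ?_ _
  exact_mod_cast hP

/-! ### The improving sequence -/

/-- The strategy vector after `t` steps. Every node owns the edge to its successor; a node `i ≥ 5`
buys the edge to the hub `3` in step `i - 4`, node `0` does so in step `n - 4`, and
in step `n - 3 + j` node `1` buys the edge to `5 + 3 * j`. -/
def stage (n t : ℕ) : Strategy (Fin n) := fun i =>
  Finset.univ.filter fun w : Fin n =>
    (w : ℕ) = i + 1 ∨
    ((w : ℕ) = 3 ∧ 5 ≤ (i : ℕ) ∧ (i : ℕ) < 5 + t) ∨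
    ((w : ℕ) = 3 ∧ (i : ℕ) = 0 ∧ n ≤ t + 4) ∨
    ((i : ℕ) = 1 ∧ 5 ≤ (w : ℕ) ∧ (w : ℕ) % 3 = 2 ∧ (w : ℕ) + 3 * n < 3 * t + 17)

lemma mem_stage {n t : ℕ} (i w : Fin n) : w ∈ stage n t i ↔
    ((w : ℕ) = i + 1 ∨
    ((w : ℕ) = 3 ∧ 5 ≤ (i : ℕ) ∧ (i : ℕ) < 5 + t) ∨
    ((w : ℕ) = 3 ∧ (i : ℕ) = 0 ∧ n ≤ t + 4) ∨
    ((i : ℕ) = 1 ∧ 5 ≤ (w : ℕ) ∧ (w : ℕ) % 3 = 2 ∧ (w : ℕ) + 3 * n < 3 * t + 17)) := by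
  simp [stage]

lemma stage_zero {n : ℕ} (hn : 7 ≤ n) : stage n 0 = pathStrat n := by
  funext i
  ext w
  rw [mem_stage]
  unfold pathStrat
  split_ifs with h
  · simp only [Finset.mem_singleton, Fin.ext_iff]
    omega
  · have := w.isLt
    simp only [Finset.notMem_empty, iff_false]
    omega

lemma stage_mono {n t : ℕ} : netG (stage n t) ≤ netG (stage n (t + 1)) := by
  refine netG_mono fun u w => ?_
  simp only [mem_stage]
  omega

lemma stage_preconnected {n t : ℕ} : (netG (stage n t)).Preconnected := by
  have key : ∀ (m : ℕ) (hm : m < n), (netG (stage n t)).Reachable ⟨0, by omega⟩ ⟨m, hm⟩ := by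
    intro m
    induction m with
    | zero => intro _; exact SimpleGraph.Reachable.refl _
    | succ m ih =>
      intro hm
      refine (ih (by omega)).trans (SimpleGraph.Adj.reachable ?_)
      rw [netG_adj]
      refine ⟨by simp [Fin.ext_iff], .inl ?_⟩
      rw [mem_stage]
      exact .inl rfl
  intro x y
  exact (key x x.isLt).symm.trans (key y y.isLt)

lemma notMem_stage_self {n t : ℕ} (u : Fin n) : u ∉ stage n t u := by
  rw [mem_stage]; omega

lemma lipschitz_stage {n t : ℕ} (f : Fin n → ℕ)
    (h : ∀ a b, b ∈ stage n t a → f a ≤ f b + 1 ∧ f b ≤ f a + 1) :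
    ∀ a b, (netG (stage n t)).Adj a b → f b ≤ f a + 1 := by
  intro a b hab
  rcases ((netG_adj _ _ _).1 hab).2 with h' | h'
  · exact (h _ _ h').2
  · exact (h _ _ h').1

/-- A step from one stage to the next is an improving single-edge purchase, given a potential `f`
bounding the old distances from below and savings `c` bounding the new ones from above. -/
lemma stage_step {n t : ℕ} (u v : Fin n) (hvu : v ≠ u)
    (hv : v ∉ stage n t u) (hu : u ∉ stage n t v)
    (hupd : ∀ x w : Fin n, w ∈ stage n (t + 1) x ↔ (w ∈ stage n t x ∨ (x = u ∧ w = v)))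
    (f c : Fin n → ℕ) (hfu : f u = 0)
    (hf : ∀ a b, b ∈ stage n t a → f a ≤ f b + 1 ∧ f b ≤ f a + 1)
    (hc : ∀ w, c w ≠ 0 → c w ≤ f w ∧
      (netG (stage n (t + 1))).edist u w ≤ ((f w - c w : ℕ) : ℕ∞))
    (hprice : deg (stage n (t + 1)) v - 1 < ∑ w, c w) :
    ∃ (u v : Fin n), v ≠ u ∧ v ∉ stage n t u ∧ u ∉ stage n t v ∧
      stage n (t + 1) = Function.update (stage n t) u (insert v (stage n t u)) ∧
      cost (stage n (t + 1)) u < cost (stage n t) u := by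
  have heq : stage n (t + 1) = Function.update (stage n t) u (insert v (stage n t u)) := by
    funext x
    ext w
    rw [hupd]
    by_cases hx : x = u
    · subst hx; simp [or_comm]
    · simp [hx]
  refine ⟨u, v, hvu, hv, hu, heq, ?_⟩
  refine cost_lt_of_gain heq hv (notMem_stage_self u) stage_preconnected c (fun w => ?_) hprice
  by_cases h0 : c w = 0
  · rw [h0, Nat.cast_zero, add_zero]
    exact SimpleGraph.edist_anti stage_mono
  · obtain ⟨h1, h2⟩ := hc w h0
    refine (add_le_add_left h2 _).trans (le_trans ?_
      (le_edist_of_lipschitz f (lipschitz_stage f hf) u w hfu))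
    exact_mod_cast (by omega : f w - c w + c w ≤ f w)

lemma stage_adj {n t : ℕ} {a b : Fin n} (h : b ∈ stage n t a ∨ a ∈ stage n t b) :
    (netG (stage n t)).Adj a b := by
  rw [netG_adj]
  refine ⟨?_, h⟩
  rintro rfl
  exact h.elim (notMem_stage_self a) (notMem_stage_self a)

lemma sum_indicator_le {n m M : ℕ} (s d : ℕ) (hM : m ≤ n) (h : M = (m - s) * d) :
    M ≤ ∑ w : Fin n, (if s ≤ (w : ℕ) ∧ (w : ℕ) < m then d else 0) := by
  rw [Fin.sum_univ_eq_sum_range (fun w => if s ≤ w ∧ w < m then d else 0) n, ← Finset.sum_filter]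
  have : (Finset.range n).filter (fun w => s ≤ w ∧ w < m) = Finset.Ico s m := by
    ext w
    simp only [Finset.mem_filter, Finset.mem_range, Finset.mem_Ico]
    omega
  rw [this]
  simp [h]

/-- A node `k ≥ 5` buys the edge to the hub. -/
lemma step_hub {n t : ℕ} (ht : t + 5 < n) :
    ∃ (u v : Fin n), v ≠ u ∧ v ∉ stage n t u ∧ u ∉ stage n t v ∧
      stage n (t + 1) = Function.update (stage n t) u (insert v (stage n t u)) ∧
      cost (stage n (t + 1)) u < cost (stage n t) u := by
  have h3 : 3 < n := by omega
  have h0 : 0 < n := by omega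
  have h1 : 1 < n := by omega
  have hk : 5 + t < n := by omega
  have a03 : (netG (stage n (t + 1))).Adj ⟨5 + t, hk⟩ ⟨3, h3⟩ :=
    stage_adj (.inl (by simp only [mem_stage, true_and]; omega))
  have a32 : (netG (stage n (t + 1))).Adj ⟨3, h3⟩ ⟨2, by omega⟩ :=
    stage_adj (.inr ((mem_stage _ _).2 (.inl rfl)))
  have a21 : (netG (stage n (t + 1))).Adj ⟨2, by omega⟩ ⟨1, h1⟩ :=
    stage_adj (.inr ((mem_stage _ _).2 (.inl rfl)))
  have a10 : (netG (stage n (t + 1))).Adj ⟨1, h1⟩ ⟨0, h0⟩ :=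
    stage_adj (.inr ((mem_stage _ _).2 (.inl rfl)))
  refine stage_step ⟨5 + t, hk⟩ ⟨3, h3⟩ ?_ ?_ ?_ ?_
    (fun w => if 5 + t ≤ (w : ℕ) then w - (5 + t) else if (w : ℕ) = 4 + t then 1
      else if (w : ℕ) = 3 + t ∨ (w : ℕ) = 3 then 2 else if 2 ≤ (w : ℕ) then 3
      else 5 - w)
    (fun w => if 0 ≤ (w : ℕ) ∧ (w : ℕ) < 3 + t then 1 else 0) ?_ ?_ ?_ ?_
  · simp only [ne_eq, Fin.ext_iff]; omega
  · simp only [mem_stage, true_and]; omega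
  · simp only [mem_stage]; omega
  · intro x w
    simp only [mem_stage, Fin.ext_iff]
    omega
  · simp
  · intro a b hab
    rw [mem_stage] at hab
    have := a.isLt
    have := b.isLt
    constructor <;> split_ifs <;> omega
  · intro w hw
    have hw' : (w : ℕ) < 3 + t := by
      by_contra h
      exact hw (if_neg (by omega))
    rw [if_pos ⟨Nat.zero_le _, hw'⟩, if_neg (by omega), if_neg (by omega)]
    have d3 := edist_le_one a03
    have d2 := edist_le_two a03 a32
    have d1 := edist_le_succ (m := 2) d2 a21
    have d0 := edist_le_succ (m := 3) d1 a10
    by_cases e3 : (w : ℕ) = 3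
    · obtain rfl : w = ⟨3, h3⟩ := Fin.ext e3
      simpa using d3
    rw [if_neg (by omega)]
    by_cases e2 : 2 ≤ (w : ℕ)
    · rw [if_pos e2]
      refine ⟨by omega, ?_⟩
      have aw : (netG (stage n (t + 1))).Adj ⟨3, h3⟩ w := by
        apply stage_adj
        simp only [mem_stage, true_and]
        omega
      exact edist_le_two a03 aw
    · rw [if_neg e2]
      rcases (by omega : (w : ℕ) = 0 ∨ (w : ℕ) = 1) with e | e
      · obtain rfl : w = ⟨0, h0⟩ := Fin.ext e
        exact ⟨by simp, d0⟩
      · obtain rfl : w = ⟨1, h1⟩ := Fin.ext e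
        exact ⟨by simp, d1⟩
  · have hd : deg (stage n (t + 1)) ⟨3, h3⟩ ≤ ((Finset.Icc 2 (5 + t)).erase 3).card := by
      refine deg_le_card _ fun w hw => ?_
      rw [netG_adj] at hw
      simp only [mem_stage, ne_eq, Fin.ext_iff] at hw
      simp only [Finset.mem_erase, Finset.mem_Icc]
      omega
    rw [Finset.card_erase_of_mem (by simp; omega), Nat.card_Icc] at hd
    have := sum_indicator_le (n := n) (m := 3 + t) (M := 3 + t) 0 1 (by omega) (by omega)
    omega

/-- Node `0` buys the edge to the hub. -/
lemma step_end {n t : ℕ} (ht : t + 5 = n) (hn : 7 ≤ n) :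
    ∃ (u v : Fin n), v ≠ u ∧ v ∉ stage n t u ∧ u ∉ stage n t v ∧
      stage n (t + 1) = Function.update (stage n t) u (insert v (stage n t u)) ∧
      cost (stage n (t + 1)) u < cost (stage n t) u := by
  have h3 : 3 < n := by omega
  have h0 : 0 < n := by omega
  have a03 : (netG (stage n (t + 1))).Adj ⟨0, h0⟩ ⟨3, h3⟩ :=
    stage_adj (.inl (by simp only [mem_stage, true_and]; omega))
  refine stage_step ⟨0, h0⟩ ⟨3, h3⟩ ?_ ?_ ?_ ?_
    (fun w => if 4 ≤ (w : ℕ) then 4 else w)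
    (fun w => if 4 ≤ (w : ℕ) ∧ (w : ℕ) < n then 2 else 0) ?_ ?_ ?_ ?_
  · simp only [ne_eq, Fin.ext_iff]; omega
  · simp only [mem_stage, true_and]; omega
  · simp only [mem_stage]; omega
  · intro x w
    simp only [mem_stage, Fin.ext_iff]
    omega
  · simp
  · intro a b hab
    rw [mem_stage] at hab
    have := a.isLt
    have := b.isLt
    constructor <;> split_ifs <;> omega
  · intro w hw
    have hw' : 4 ≤ (w : ℕ) := by
      by_contra h
      exact hw (if_neg (by omega))
    rw [if_pos ⟨hw', w.isLt⟩, if_pos hw']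
    refine ⟨by omega, ?_⟩
    have aw : (netG (stage n (t + 1))).Adj ⟨3, h3⟩ w := by
      apply stage_adj
      simp only [mem_stage, true_and]
      omega
    exact edist_le_two a03 aw
  · have hd : deg (stage n (t + 1)) ⟨3, h3⟩ ≤ (((Finset.range n).erase 3).erase 1).card := by
      refine deg_le_card _ fun w hw => ?_
      rw [netG_adj] at hw
      simp only [mem_stage, ne_eq, Fin.ext_iff] at hw
      simp only [Finset.mem_erase, Finset.mem_range]
      omega
    rw [Finset.card_erase_of_mem (by simp; omega), Finset.card_erase_of_mem (by simp; omega),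
      Finset.card_range] at hd
    have := sum_indicator_le (n := n) (m := n) (M := (n - 4) * 2) 4 2 le_rfl rfl
    omega

/-- Node `1`, the only one missing the hub, buys the edge to `5 + 3 * j`. -/
lemma step_cover {n t j : ℕ} (ht : t + 4 = n + j) (hj : 5 + 3 * j + 1 < n) :
    ∃ (u v : Fin n), v ≠ u ∧ v ∉ stage n t u ∧ u ∉ stage n t v ∧
      stage n (t + 1) = Function.update (stage n t) u (insert v (stage n t u)) ∧
      cost (stage n (t + 1)) u < cost (stage n t) u := by
  have h1 : 1 < n := by omega
  have hv : 5 + 3 * j < n := by omega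
  have auv : (netG (stage n (t + 1))).Adj ⟨1, h1⟩ ⟨5 + 3 * j, hv⟩ :=
    stage_adj (.inl (by simp only [mem_stage, true_and]; omega))
  refine stage_step ⟨1, h1⟩ ⟨5 + 3 * j, hv⟩ ?_ ?_ ?_ ?_
    (fun w => if (w : ℕ) = 1 then 0 else if 4 + 3 * j ≤ (w : ℕ) then 3
      else if (w : ℕ) ≤ 2 ∨ (w : ℕ) % 3 = 2 then 1 else 2)
    (fun w => (if 4 + 3 * j ≤ (w : ℕ) ∧ (w : ℕ) < 7 + 3 * j then 1 else 0)
      + (if 5 + 3 * j ≤ (w : ℕ) ∧ (w : ℕ) < 6 + 3 * j then 1 else 0)) ?_ ?_ ?_ ?_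
  · simp only [ne_eq, Fin.ext_iff]; omega
  · simp only [mem_stage, true_and]; omega
  · simp only [mem_stage]; omega
  · intro x w
    simp only [mem_stage, Fin.ext_iff]
    omega
  · simp
  · intro a b hab
    rw [mem_stage] at hab
    have := a.isLt
    have := b.isLt
    constructor <;> split_ifs <;> omega
  · intro w hw
    have hw' : 4 + 3 * j ≤ (w : ℕ) ∧ (w : ℕ) < 7 + 3 * j := by
      by_contra h
      refine hw ?_
      rw [if_neg h, if_neg (by omega)]
    have w1 : ¬ (w : ℕ) = 1 := by omega
    rw [if_pos hw', if_neg w1, if_pos hw'.1]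
    by_cases e : (w : ℕ) = 5 + 3 * j
    · rw [if_pos (show 5 + 3 * j ≤ (w : ℕ) ∧ (w : ℕ) < 6 + 3 * j by omega)]
      obtain rfl : w = ⟨5 + 3 * j, hv⟩ := Fin.ext e
      exact ⟨by norm_num, by simpa using edist_le_one auv⟩
    · rw [if_neg (show ¬ (5 + 3 * j ≤ (w : ℕ) ∧ (w : ℕ) < 6 + 3 * j) by omega)]
      refine ⟨by norm_num, ?_⟩
      have aw : (netG (stage n (t + 1))).Adj ⟨5 + 3 * j, hv⟩ w := by
        apply stage_adj
        simp only [mem_stage]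
        omega
      exact edist_le_two auv aw
  · have hd : deg (stage n (t + 1)) ⟨5 + 3 * j, hv⟩
        ≤ ({4 + 3 * j, 6 + 3 * j, 3, 1} : Finset ℕ).card := by
      refine deg_le_card _ fun w hw => ?_
      rw [netG_adj] at hw
      simp only [mem_stage, ne_eq, Fin.ext_iff] at hw
      simp only [Finset.mem_insert, Finset.mem_singleton]
      omega
    have hd' := hd.trans Finset.card_le_four
    rw [Finset.sum_add_distrib]
    have := sum_indicator_le (n := n) (m := 7 + 3 * j) (M := 3) (4 + 3 * j) 1
      (by omega) (by omega)
    have := sum_indicator_le (n := n) (m := 6 + 3 * j) (M := 1) (5 + 3 * j) 1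
      (by omega) (by omega)
    omega

/-! ### The final network -/

lemma isAOEq_stage {n t : ℕ} (hn : 7 ≤ n) (hmod : n % 3 = 1) (ht : t = n - 4 + (n - 4) / 3) :
    IsAOEq (stage n t) := by
  obtain ⟨m, rfl⟩ : ∃ m, n = 3 * m + 7 := ⟨(n - 7) / 3, by omega⟩
  obtain rfl : t = 4 * m + 4 := by omega
  clear ht hn hmod
  have h3 : 3 < 3 * m + 7 := by omega
  have h1 : 1 < 3 * m + 7 := by omega
  have hub : ∀ x : Fin (3 * m + 7), (x : ℕ) ≠ 1 → (x : ℕ) ≠ 3 → (netG (stage (3 * m + 7) (4 * m + 4))).Adj ⟨3, h3⟩ x := by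
    intro x hx1 hx3
    have := x.isLt
    apply stage_adj
    simp only [mem_stage, true_and]
    omega
  have one : ∀ y : Fin (3 * m + 7), (netG (stage (3 * m + 7) (4 * m + 4))).edist ⟨1, h1⟩ y ≤ 2 := by
    intro y
    have := y.isLt
    by_cases y1 : (y : ℕ) = 1
    · obtain rfl : y = ⟨1, h1⟩ := Fin.ext y1
      simp
    by_cases yn : (y : ℕ) ≤ 2 ∨ (5 ≤ (y : ℕ) ∧ (y : ℕ) % 3 = 2)
    · refine (edist_le_one (stage_adj ?_)).trans (by norm_num)
      simp only [mem_stage, true_and]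
      omega
    -- The remaining nodes are adjacent to `2` or to one of `5, 8, …, n - 2`.
    obtain ⟨z, hz, hzy⟩ : ∃ z : Fin (3 * m + 7), ((z : ℕ) = 2 ∨ (5 ≤ (z : ℕ) ∧ (z : ℕ) % 3 = 2)) ∧
        ((y : ℕ) = z + 1 ∨ (z : ℕ) = y + 1) := by
      by_cases hy : (y : ℕ) % 3 = 0
      · exact ⟨⟨y - 1, by omega⟩, by dsimp only; omega, by dsimp only; omega⟩
      · exact ⟨⟨y + 1, by omega⟩, by dsimp only; omega, by dsimp only; omega⟩
    have := z.isLt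
    have hz1 : (netG (stage (3 * m + 7) (4 * m + 4))).Adj ⟨1, h1⟩ z := by
      refine stage_adj (.inl ((mem_stage _ _).2 ?_))
      rcases hz with hz | hz
      · exact .inl hz
      · exact .inr (.inr (.inr ⟨rfl, hz.1, hz.2, by omega⟩))
    refine edist_le_two hz1 (stage_adj ?_)
    rw [mem_stage, mem_stage]
    exact hzy.imp .inl .inl
  refine isAOEq_of_diam_two (fun x y => ?_) (fun x => ?_)
  · by_cases x1 : (x : ℕ) = 1
    · obtain rfl : x = ⟨1, h1⟩ := Fin.ext x1
      exact one y
    by_cases y1 : (y : ℕ) = 1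
    · obtain rfl : y = ⟨1, h1⟩ := Fin.ext y1
      rw [SimpleGraph.edist_comm]
      exact one x
    by_cases x3 : (x : ℕ) = 3
    · obtain rfl : x = ⟨3, h3⟩ := Fin.ext x3
      by_cases y3 : (y : ℕ) = 3
      · obtain rfl : y = ⟨3, h3⟩ := Fin.ext y3
        simp
      · exact (edist_le_one (hub y y1 y3)).trans (by norm_num)
    by_cases y3 : (y : ℕ) = 3
    · obtain rfl : y = ⟨3, h3⟩ := Fin.ext y3
      exact (edist_le_one (hub x x1 x3).symm).trans (by norm_num)
    exact edist_le_two (hub x x1 x3).symm (hub y y1 y3)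
  · by_cases x0 : (x : ℕ) = 0
    · refine two_le_deg (a := ⟨1, h1⟩) (b := ⟨3, h3⟩) (by simp [Fin.ext_iff])
        (stage_adj (.inl ?_)) (hub x (by omega) (by omega)).symm
      rw [mem_stage]; exact .inl (by dsimp only; omega)
    have hx := x.isLt
    have hprev : (netG (stage (3 * m + 7) (4 * m + 4))).Adj x ⟨x - 1, by omega⟩ := by
      refine stage_adj (.inr ?_)
      rw [mem_stage]; exact .inl (by dsimp only; omega)
    by_cases xn : (x : ℕ) + 1 = 3 * m + 7
    · refine two_le_deg (b := ⟨3, h3⟩) ?_ hprev (hub x (by omega) (by omega)).symm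
      simp only [ne_eq, Fin.ext_iff]; omega
    · refine two_le_deg (b := ⟨x + 1, by omega⟩) ?_ hprev (stage_adj (.inl ?_))
      · simp only [ne_eq, Fin.ext_iff]; omega
      · rw [mem_stage]; exact .inl rfl

/-- For every sufficiently large `n` with `n ≡ 1 (mod 3)`,
starting from the path `P_n` there is a sequence of at most
`n - 2 + (n - 7)/3` steps, in each of which one agent adds a single edge to
her strategy and thereby strictly decreases her cost, ending in an equilibrium
of the degAOG. -/
theorem path_to_AOEq :
    ∃ N : ℕ, ∀ n : ℕ, N ≤ n → n % 3 = 1 →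
      ∃ (L : ℕ) (seq : Fin (L + 1) → Strategy (Fin n)),
        L ≤ n - 2 + (n - 7) / 3 ∧
        seq 0 = pathStrat n ∧
        (∀ i : Fin L, ∃ (u v : Fin n),
          v ≠ u ∧ v ∉ seq i.castSucc u ∧ u ∉ seq i.castSucc v ∧
          seq i.succ =
            Function.update (seq i.castSucc) u (insert v (seq i.castSucc u)) ∧
          cost (seq i.succ) u < cost (seq i.castSucc) u) ∧
        IsAOEq (seq (Fin.last L)) := by
  refine ⟨7, fun n hn hmod => ⟨n - 4 + (n - 4) / 3, fun i => stage n i, ?_, ?_, ?_, ?_⟩⟩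
  · omega
  · exact stage_zero hn
  · intro i
    have hi := i.isLt
    change ∃ u v : Fin n, v ≠ u ∧ v ∉ stage n i u ∧ u ∉ stage n i v ∧
      stage n (i + 1) = Function.update (stage n i) u (insert v (stage n i u)) ∧
      cost (stage n (i + 1)) u < cost (stage n i) u
    rcases lt_trichotomy ((i : ℕ) + 5) n with h | h | h
    · exact step_hub h
    · exact step_end h hn
    · exact step_cover (j := i + 4 - n) (by omega) (by omega)
  · exact isAOEq_stage hn hmod rfl
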